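/- (Lemma 2, first part.) Under the construction setup, for each fixed 0 ≤ t_1 ≤ 2^s−1 the family S^{t_1} = {S^{(t_1,t_2)} : 0 ≤ t_2 ≤ 2^{k+1}−1} is a (2^{k+1}, 2^{k+1}, 2^m)-CCC; that is, writing s^{(t_1,t_2)}_ν (0 ≤ ν ≤ 2^{k+1}−1) for the sequences of S^{(t_1,t_2)} (indexed by (d,d_0,…,d_{k−1})), one has Σ_{ν=0}^{2^{k+1}−1} γ(s^{(t_1,t_2)}_ν, s^{(t_1,t_2')}_ν)(u) = 2^{m+k+1} if t_2 = t_2' and u = 0; = 0 if t_2 = t_2' and 0 < |u| < 2^m; and = 0 if t_2 ≠ t_2' and |u| < 2^m. -/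

import Mathlib

/-- Aperiodic cross-correlation function (ACCF) of two complex sequences of length `L`,
for an integer shift `u` with `−L < u ≤ L`:
`γ(a,b)(u) = Σ_{i=0}^{L−1−u} a_i · conj(b_{i+u})` for `0 ≤ u`, and
`γ(a,b)(u) = Σ_{i=0}^{L+u−1} a_{i−u} · conj(b_i)` for `u < 0`. -/
noncomputable def accf (L : ℕ) (a b : ℕ → ℂ) (u : ℤ) : ℂ :=
  if 0 ≤ u then ∑ i ∈ Finset.range (L - u.toNat), a i * (starRingEnd ℂ) (b (i + u.toNat))
  else ∑ i ∈ Finset.range (L - (-u).toNat), a (i + (-u).toNat) * (starRingEnd ℂ) (b i)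

/-- ACCF for a nonnegative shift `u : ℕ`. -/
noncomputable def accfN (L : ℕ) (a b : ℕ → ℂ) (u : ℕ) : ℂ :=
  ∑ i ∈ Finset.range (L - u), a i * (starRingEnd ℂ) (b (i + u))

/-- Periodic cross-correlation function of two sequences of length `N`. -/
noncomputable def pccf (N : ℕ) (x y : ℕ → ℂ) (u : ℕ) : ℂ :=
  ∑ n ∈ Finset.range N, x n * (starRingEnd ℂ) (y ((n + u) % N))

/-- The `t`-th bit of `x`, as an element of `ZMod q`. -/
def bitc (q : ℕ) (x t : ℕ) : ZMod q := if x.testBit t then 1 else 0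

/-- The `t`-th bit of `x`, as a natural number. -/
def bitn (x t : ℕ) : ℕ := if x.testBit t then 1 else 0

/-- `ω = exp(2π√−1/q)`. -/
noncomputable def omegaQ (q : ℕ) : ℂ := Complex.exp (2 * Real.pi * Complex.I / (q : ℂ))

/-- The construction setup of Lemma 2/Theorem 1: integers `0 ≤ s ≤ k ≤ m−2`, an even
integer `q ≥ 2`, index sets `J = {j_0,…,j_{k−1−s}} ⊆ {0,…,m−s−1}` and
`I = {i_0,…,i_{m−k−1}} = {0,…,m−s−1} \ J`, a permutation `π` of `{0,…,m−k−1}`,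
and a GBF `f : {0,1}^m → ℤ_q` (written as a function of the index `x < 2^m`) all of whose
restrictions over the variables `x_{j_0},…,x_{j_{k−s−1}}` are of the prescribed
path-plus-isolated-vertices quadratic form. -/
structure ZCZSetup where
  /-- the (even) alphabet size -/
  q : ℕ
  hq : 2 ≤ q
  hqeven : Even q
  m : ℕ
  k : ℕ
  s : ℕ
  hsk : s ≤ k
  hkm : k + 2 ≤ m
  /-- `jv β = j_β` for `β < k − s` (the non-forced part of `J`) -/
  jv : ℕ → ℕ
  /-- `iv β = i_β` for `β < m − k` (an enumeration of `I`) -/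
  iv : ℕ → ℕ
  /-- the permutation `π` of `{0,…,m−k−1}` -/
  perm : ℕ → ℕ
  hperm : Set.BijOn perm (Set.Iio (m - k)) (Set.Iio (m - k))
  hjv_lt : ∀ β < k - s, jv β < m - s
  hjv_inj : ∀ β₁ < k - s, ∀ β₂ < k - s, jv β₁ = jv β₂ → β₁ = β₂
  hiv_lt : ∀ β < m - k, iv β < m - s
  hiv_inj : ∀ β₁ < m - k, ∀ β₂ < m - k, iv β₁ = iv β₂ → β₁ = β₂
  hdisj : ∀ β₁ < k - s, ∀ β₂ < m - k, jv β₁ ≠ iv β₂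
  /-- the GBF `f`, as a function of the index `x` (with `j`-th bit `x_j`) -/
  f : ℕ → ZMod q
  hf : ∀ e : ℕ → Bool, ∃ u : ℕ → ZMod q, ∃ v' : ℕ → ZMod q, ∃ v : ZMod q,
    ∀ x < 2 ^ m, (∀ β < k - s, x.testBit (jv β) = e β) →
      f x = ((q / 2 : ℕ) : ZMod q) * (∑ β ∈ Finset.range (m - k - 1),
              bitc q x (iv (perm β)) * bitc q x (iv (perm (β + 1))))
          + (∑ β ∈ Finset.range (m - k), u β * bitc q x (iv β))
          + (∑ β ∈ Finset.range s, v' β * bitc q x (m - s + β)) + v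

namespace ZCZSetup

variable (C : ZCZSetup)

/-- The full tuple `(j_0,…,j_{k−1})`: `j_β = jv β` for `β < k − s` and
`j_{k−s+β} = m − s + β` for `0 ≤ β < s`. -/
def jfull (β : ℕ) : ℕ :=
  if β < C.k - C.s then C.jv β else C.m - C.s + (β - (C.k - C.s))

/-- The bits `b_0,…,b_{k+s+1}`: `t_2 = Σ_{β=0}^{k} b_β 2^β` and
`t_1 = Σ_{β=0}^{s−1} b_{k+1+β} 2^β`. -/
def bbit (t1 t2 β : ℕ) : ℕ :=
  if β < C.k + 1 then bitn t2 β else bitn t1 (β - (C.k + 1))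

/-- `γ_1 = i_{π(0)}`, an end vertex of the path. -/
def gamma1 : ℕ := C.iv (C.perm 0)

/-- `γ_2 = i_{π(m−k−1)}`, the other end vertex of the path. -/
def gamma2 : ℕ := C.iv (C.perm (C.m - C.k - 1))

/-- The GBF (as a function of the index `x`) of the `ν`-th sequence of `S^{(t_1,t_2)}`,
where `ν = d·2^k + Σ_{β=0}^{k−1} d_β 2^β` encodes `(d, d_0,…,d_{k−1})`. -/
def gExp (t1 t2 ν x : ℕ) : ZMod C.q :=
  C.f x + ((C.q / 2 : ℕ) : ZMod C.q) *
    ((∑ β ∈ Finset.range C.k, bitc C.q ν β * bitc C.q x (C.jfull β))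
     + bitc C.q ν C.k * bitc C.q x C.gamma1
     + (∑ β ∈ Finset.range C.k, ((C.bbit t1 t2 β : ℕ) : ZMod C.q) * bitc C.q x (C.jfull β))
     + (∑ β ∈ Finset.Ico (C.k - C.s) C.k,
          bitc C.q ν β * ((C.bbit t1 t2 (C.s + 1 + β) : ℕ) : ZMod C.q))
     + ((C.bbit t1 t2 C.k : ℕ) : ZMod C.q) * bitc C.q x C.gamma2)

/-- The `ν`-th sequence `s^{(t_1,t_2)}_ν` of `S^{(t_1,t_2)}` (a complex sequence of
length `2^m`). -/
noncomputable def Sseq (t1 t2 ν : ℕ) : ℕ → ℂ :=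
  fun x => omegaQ C.q ^ (C.gExp t1 t2 ν x).val

end ZCZSetup

section BitFlip

/-- Flipping a bit that is `0` adds the corresponding power of two; flipping a bit that is `1`
subtracts it. -/
lemma Nat.cast_xor_two_pow (x c : ℕ) :
    ((x ^^^ 2 ^ c : ℕ) : ℤ) = x + if x.testBit c then -2 ^ c else 2 ^ c := by
  induction c generalizing x with
  | zero =>
    have hdiv : (x ^^^ 1) / 2 = x / 2 := by simp [Nat.xor_div_two]
    have hmod : (x ^^^ 1) % 2 = (x + 1) % 2 := Nat.xor_mod_two_eq
    simp only [pow_zero, Nat.testBit_zero, decide_eq_true_eq]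
    split_ifs <;> omega
  | succ c ih =>
    have hdiv : (x ^^^ 2 ^ (c + 1)) / 2 = x / 2 ^^^ 2 ^ c := by
      rw [Nat.xor_div_two, pow_succ, Nat.mul_div_cancel _ two_pos]
    have hmod : (x ^^^ 2 ^ (c + 1)) % 2 = x % 2 := by
      rw [Nat.xor_mod_two_eq, pow_succ]; omega
    have hx := ih (x / 2)
    rw [← hdiv] at hx
    rw [Nat.testBit_succ]
    generalize x ^^^ 2 ^ (c + 1) = z at hdiv hmod hx ⊢
    split_ifs at hx ⊢ <;> push_cast [pow_succ] at hx ⊢ <;> omega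

lemma Nat.testBit_xor_two_pow (x c r : ℕ) :
    (x ^^^ 2 ^ c).testBit r = if r = c then !x.testBit r else x.testBit r := by
  rw [Nat.testBit_xor, Nat.testBit_two_pow]
  split_ifs with h
  · simp [h]
  · simp [Ne.symm h]

lemma Nat.xor_two_pow_lt {x c n : ℕ} (hx : x < 2 ^ n) (hc : c < n) : x ^^^ 2 ^ c < 2 ^ n :=
  Nat.xor_lt_two_pow hx (Nat.pow_lt_pow_right one_lt_two hc)

/-- Flipping a common bit of two numbers preserves their difference. -/
lemma Nat.cast_xor_two_pow_eq_add {x y c : ℕ} {u : ℤ} (h : (y : ℤ) = x + u)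
    (hc : x.testBit c = y.testBit c) :
    ((y ^^^ 2 ^ c : ℕ) : ℤ) = (x ^^^ 2 ^ c : ℕ) + u := by
  rw [Nat.cast_xor_two_pow, Nat.cast_xor_two_pow, hc, h]; ring

lemma bitc_xor_two_pow (q x c r : ℕ) :
    bitc q (x ^^^ 2 ^ c) r = if r = c then 1 - bitc q x r else bitc q x r := by
  unfold bitc
  rw [Nat.testBit_xor_two_pow]
  by_cases h : r = c <;> cases x.testBit r <;> simp [h]

lemma bitc_congr (q : ℕ) {x y r r' : ℕ} (h : x.testBit r = y.testBit r') :
    bitc q x r = bitc q y r' := by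
  rw [bitc, bitc, h]

end BitFlip

/-- A sum over a finite set vanishes when an involution of the set negates the summand. -/
lemma Finset.sum_eq_zero_of_sign_reversing {ι : Type*} (S : Finset ι) (F : ι → ℂ) (g : ι → ι)
    (hmem : ∀ a ∈ S, g a ∈ S) (hinv : ∀ a ∈ S, g (g a) = a) (hneg : ∀ a ∈ S, F (g a) = -F a) :
    ∑ a ∈ S, F a = 0 := by
  refine Finset.sum_involution (fun a _ => g a) (fun a ha => by rw [hneg a ha, add_neg_cancel])
    (fun a ha hF hfix => hF ?_) hmem hinv
  have := hneg a ha
  rw [hfix] at this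
  exact CharZero.eq_neg_self_iff.mp this

/-- The aperiodic cross-correlation as a sum over all pairs of positions at distance `u`. -/
lemma accf_eq_sum_pairs (L : ℕ) (a b : ℕ → ℂ) (u : ℤ) :
    accf L a b u = ∑ p ∈ (Finset.range L ×ˢ Finset.range L).filter
      (fun p : ℕ × ℕ => (p.2 : ℤ) = p.1 + u), a p.1 * (starRingEnd ℂ) (b p.2) := by
  unfold accf
  split_ifs with hu
  · refine Finset.sum_bij' (fun i _ => (i, i + u.toNat)) (fun p _ => p.1) ?_ ?_ ?_ ?_ ?_
    · intro i hi
      simp only [Finset.mem_range, Finset.mem_filter, Finset.mem_product] at hi ⊢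
      omega
    · rintro ⟨x, y⟩ hp
      simp only [Finset.mem_range, Finset.mem_filter, Finset.mem_product] at hp ⊢
      omega
    · intro i hi; rfl
    · rintro ⟨x, y⟩ hp
      simp only [Finset.mem_range, Finset.mem_filter, Finset.mem_product] at hp
      refine Prod.ext ?_ ?_ <;> dsimp only <;> omega
    · intro i hi; rfl
  · refine Finset.sum_bij' (fun i _ => (i + (-u).toNat, i)) (fun p _ => p.2) ?_ ?_ ?_ ?_ ?_
    · intro i hi
      simp only [Finset.mem_range, Finset.mem_filter, Finset.mem_product] at hi ⊢
      omega
    · rintro ⟨x, y⟩ hp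
      simp only [Finset.mem_range, Finset.mem_filter, Finset.mem_product] at hp ⊢
      omega
    · intro i hi; rfl
    · rintro ⟨x, y⟩ hp
      simp only [Finset.mem_range, Finset.mem_filter, Finset.mem_product] at hp
      refine Prod.ext ?_ ?_ <;> dsimp only <;> omega
    · intro i hi; rfl

namespace ZCZSetup

variable (C : ZCZSetup)

instance : NeZero C.q := ⟨by have := C.hq; omega⟩

/-- The element `q/2` of `ℤ_q`. -/
def half : ZMod C.q := ((C.q / 2 : ℕ) : ZMod C.q)

lemma half_add_half : C.half + C.half = 0 := by
  unfold half
  rw [← Nat.cast_add, ← two_mul, Nat.two_mul_div_two_of_even C.hqeven, ZMod.natCast_self]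

lemma stdAddChar_half : ZMod.stdAddChar C.half = -1 := by
  have hq : (C.q : ℂ) ≠ 0 := Nat.cast_ne_zero.mpr (NeZero.ne _)
  have hcast : ((C.q / 2 : ℕ) : ℂ) = C.q / 2 := Nat.cast_div C.hqeven.two_dvd two_ne_zero
  rw [half, ZMod.stdAddChar_apply, ZMod.toCircle_natCast, hcast, ← Complex.exp_pi_mul_I]
  congr 1
  field_simp

lemma stdAddChar_add_half (a : ZMod C.q) :
    ZMod.stdAddChar (a + C.half) = -ZMod.stdAddChar a := by
  rw [AddChar.map_add_eq_mul, stdAddChar_half, mul_neg_one]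

/-- The difference of two distinct bits is odd. -/
lemma half_mul_bitc_sub {x y r r' : ℕ} (h : x.testBit r ≠ y.testBit r') :
    C.half * (bitc C.q x r - bitc C.q y r') = C.half := by
  unfold bitc
  have := C.half_add_half
  cases hx : x.testBit r <;> cases hy : y.testBit r' <;> simp_all
  linear_combination -this

/-- The effect of a bit flip on a linear form with coefficient `q/2`. -/
lemma half_mul_sum_bitc_xor {n : ℕ} {idx : ℕ → ℕ} (hidx : Set.InjOn idx (Set.Iio n))
    (w : ℕ → ZMod C.q) (x : ℕ) {r : ℕ} (hr : r < n) :
    C.half * ∑ β ∈ Finset.range n, w β * bitc C.q (x ^^^ 2 ^ idx r) (idx β) =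
      C.half * ∑ β ∈ Finset.range n, w β * bitc C.q x (idx β) + C.half * w r := by
  have key : ∀ β ∈ Finset.range n, C.half * (w β * bitc C.q (x ^^^ 2 ^ idx r) (idx β)) =
      C.half * (w β * bitc C.q x (idx β)) + if β = r then C.half * w β else 0 := by
    intro β hβ
    rw [bitc_xor_two_pow]
    by_cases h : β = r
    · subst h
      simp only [if_true]
      linear_combination (-w β * bitc C.q x (idx β)) * C.half_add_half
    · rw [if_neg h, if_neg fun h' => h (hidx (Finset.mem_range.mp hβ) hr h'), add_zero]
  rw [Finset.mul_sum, Finset.sum_congr rfl key, Finset.sum_add_distrib, ← Finset.mul_sum,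
    Finset.sum_ite_eq', if_pos (Finset.mem_range.mpr hr)]

lemma Sseq_eq_stdAddChar (t1 t2 ν x : ℕ) :
    C.Sseq t1 t2 ν x = ZMod.stdAddChar (C.gExp t1 t2 ν x) := by
  rw [ZMod.stdAddChar_apply, ZMod.toCircle_apply, Sseq, omegaQ, ← Complex.exp_nat_mul]
  congr 1
  ring

lemma Sseq_mul_conj (t1 t2 t2' ν x y : ℕ) :
    C.Sseq t1 t2 ν x * (starRingEnd ℂ) (C.Sseq t1 t2' ν y) =
      ZMod.stdAddChar (C.gExp t1 t2 ν x - C.gExp t1 t2' ν y) := by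
  rw [Sseq_eq_stdAddChar, Sseq_eq_stdAddChar, ← AddChar.map_neg_eq_conj,
    ← AddChar.map_add_eq_mul, sub_eq_add_neg]

/-- The `r`-th vertex `i_{π(r)}` of the path. -/
def pathVertex (r : ℕ) : ℕ := C.iv (C.perm r)

/-- The variable multiplied by the `β`-th bit of `ν`: `j_β` for `β < k` and `γ_1` for `β = k`. -/
def rowVertex (β : ℕ) : ℕ := if β < C.k then C.jfull β else C.gamma1

/-- The variable multiplied by the `β`-th bit of `t_2`: `j_β` for `β < k` and `γ_2` for
`β = k`. -/
def setVertex (β : ℕ) : ℕ := if β < C.k then C.jfull β else C.gamma2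

lemma perm_lt {r : ℕ} (hr : r < C.m - C.k) : C.perm r < C.m - C.k := C.hperm.mapsTo hr

lemma pathVertex_lt {r : ℕ} (hr : r < C.m - C.k) : C.pathVertex r < C.m - C.s :=
  C.hiv_lt _ (C.perm_lt hr)

lemma pathVertex_injOn : Set.InjOn C.pathVertex (Set.Iio (C.m - C.k)) :=
  fun _ h₁ _ h₂ h => C.hperm.injOn h₁ h₂ (C.hiv_inj _ (C.perm_lt h₁) _ (C.perm_lt h₂) h)

lemma jfull_lt {β : ℕ} (hβ : β < C.k) : C.jfull β < C.m := by
  have := C.hsk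
  have := C.hkm
  unfold jfull
  split_ifs with h
  · have := C.hjv_lt β h
    omega
  · omega

lemma jfull_ne_pathVertex {β r : ℕ} (hr : r < C.m - C.k) : C.jfull β ≠ C.pathVertex r := by
  unfold jfull
  split_ifs with h
  · exact C.hdisj β h _ (C.perm_lt hr)
  · have := C.pathVertex_lt hr
    omega

lemma jfull_injOn : Set.InjOn C.jfull (Set.Iio C.k) := by
  intro β₁ h₁ β₂ h₂ h
  simp only [Set.mem_Iio] at h₁ h₂
  unfold jfull at h
  split_ifs at h with c₁ c₂ c₂
  · exact C.hjv_inj _ c₁ _ c₂ h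
  · have := C.hjv_lt _ c₁
    omega
  · have := C.hjv_lt _ c₂
    omega
  · omega

lemma setVertex_injOn : Set.InjOn C.setVertex (Set.Iio (C.k + 1)) := by
  have hlast : C.m - C.k - 1 < C.m - C.k := by have := C.hkm; omega
  intro β₁ h₁ β₂ h₂ h
  simp only [Set.mem_Iio] at h₁ h₂
  unfold setVertex at h
  split_ifs at h with c₁ c₂ c₂
  · exact C.jfull_injOn c₁ c₂ h
  · exact absurd h (C.jfull_ne_pathVertex hlast)
  · exact absurd h.symm (C.jfull_ne_pathVertex hlast)
  · omega

lemma setVertex_lt {β : ℕ} : C.setVertex β < C.m := by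
  have := C.hkm
  unfold setVertex
  split_ifs with h
  · exact C.jfull_lt h
  · have := C.pathVertex_lt (r := C.m - C.k - 1) (by omega)
    change C.pathVertex _ < C.m
    omega

lemma setVertex_ne_pathVertex {β r : ℕ} (hr : r + 1 < C.m - C.k) :
    C.setVertex β ≠ C.pathVertex r := by
  unfold setVertex
  split_ifs with h
  · exact C.jfull_ne_pathVertex (by omega)
  · intro h'
    have := C.pathVertex_injOn (show C.m - C.k - 1 < C.m - C.k by omega)
      (show r < C.m - C.k by omega) h'
    omega

/-- Every variable is one of the `j_β` or lies on the path. -/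
lemma exists_jfull_or_pathVertex {i : ℕ} (hi : i < C.m) :
    (∃ β < C.k, C.jfull β = i) ∨ ∃ r < C.m - C.k, C.pathVertex r = i := by
  have hsk := C.hsk
  have hkm := C.hkm
  by_cases his : i < C.m - C.s
  · have hdisj : Disjoint ((Finset.range (C.k - C.s)).image C.jv)
        ((Finset.range (C.m - C.k)).image C.iv) := by
      rw [Finset.disjoint_left]
      simp only [Finset.mem_image, Finset.mem_range]
      rintro _ ⟨β, hβ, rfl⟩ ⟨r, hr, h⟩
      exact C.hdisj β hβ r hr h.symm
    have hcover : (Finset.range (C.k - C.s)).image C.jv ∪ (Finset.range (C.m - C.k)).image C.iv =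
        Finset.range (C.m - C.s) := by
      refine Finset.eq_of_subset_of_card_le ?_ ?_
      · intro j hj
        simp only [Finset.mem_union, Finset.mem_image, Finset.mem_range] at hj ⊢
        rcases hj with ⟨β, hβ, rfl⟩ | ⟨β, hβ, rfl⟩
        · exact C.hjv_lt β hβ
        · exact C.hiv_lt β hβ
      · rw [Finset.card_union_of_disjoint hdisj, Finset.card_image_of_injOn,
          Finset.card_image_of_injOn]
        · simp only [Finset.card_range]
          omega
        · intro a ha b hb h
          simp only [Finset.coe_range, Set.mem_Iio] at ha hb
          exact C.hiv_inj a ha b hb h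
        · intro a ha b hb h
          simp only [Finset.coe_range, Set.mem_Iio] at ha hb
          exact C.hjv_inj a ha b hb h
    have hi' := Finset.mem_range.mpr his
    rw [← hcover] at hi'
    simp only [Finset.mem_union, Finset.mem_image, Finset.mem_range] at hi'
    rcases hi' with ⟨β, hβ, rfl⟩ | ⟨β, hβ, rfl⟩
    · exact Or.inl ⟨β, by omega, if_pos hβ⟩
    · obtain ⟨r, hr, rfl⟩ := C.hperm.surjOn hβ
      exact Or.inr ⟨r, hr, rfl⟩
  · refine Or.inl ⟨C.k - C.s + (i - (C.m - C.s)), by omega, ?_⟩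
    rw [jfull, if_neg (by omega)]
    omega

/-- The exponent of a product of two entries in the same row of two sets with the same `t_1`. -/
lemma gExp_sub (t1 t2 t2' ν x y : ℕ) :
    C.gExp t1 t2 ν x - C.gExp t1 t2' ν y = C.f x - C.f y
      + C.half * ∑ β ∈ Finset.range (C.k + 1),
          (bitc C.q x (C.rowVertex β) - bitc C.q y (C.rowVertex β)) * bitc C.q ν β
      + (C.half * ∑ β ∈ Finset.range (C.k + 1), bitc C.q t2 β * bitc C.q x (C.setVertex β)
        - C.half * ∑ β ∈ Finset.range (C.k + 1), bitc C.q t2' β * bitc C.q y (C.setVertex β)) := by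
  have hrow : ∀ z, ∑ β ∈ Finset.range (C.k + 1), bitc C.q z (C.rowVertex β) * bitc C.q ν β =
      ∑ β ∈ Finset.range C.k, bitc C.q ν β * bitc C.q z (C.jfull β)
        + bitc C.q ν C.k * bitc C.q z C.gamma1 := by
    intro z
    rw [Finset.sum_range_succ]
    refine congrArg₂ _ (Finset.sum_congr rfl fun β hβ => ?_) ?_
    · rw [rowVertex, if_pos (Finset.mem_range.mp hβ), mul_comm]
    · rw [rowVertex, if_neg (lt_irrefl _), mul_comm]
  have hbit : ∀ t β, β < C.k + 1 → ((C.bbit t1 t β : ℕ) : ZMod C.q) = bitc C.q t β := by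
    intro t β hβ
    rw [bbit, if_pos hβ, bitn, bitc]
    split_ifs <;> simp
  have hset : ∀ t z, ∑ β ∈ Finset.range (C.k + 1), bitc C.q t β * bitc C.q z (C.setVertex β) =
      ∑ β ∈ Finset.range C.k, ((C.bbit t1 t β : ℕ) : ZMod C.q) * bitc C.q z (C.jfull β)
        + ((C.bbit t1 t C.k : ℕ) : ZMod C.q) * bitc C.q z C.gamma2 := by
    intro t z
    rw [Finset.sum_range_succ]
    refine congrArg₂ _ (Finset.sum_congr rfl fun β hβ => ?_) ?_
    · have hβ := Finset.mem_range.mp hβ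
      rw [setVertex, if_pos hβ, hbit t β (by omega)]
    · rw [setVertex, if_neg (lt_irrefl _), hbit t C.k (by omega)]
  have hshift : ∑ β ∈ Finset.Ico (C.k - C.s) C.k,
        bitc C.q ν β * ((C.bbit t1 t2 (C.s + 1 + β) : ℕ) : ZMod C.q) =
      ∑ β ∈ Finset.Ico (C.k - C.s) C.k,
        bitc C.q ν β * ((C.bbit t1 t2' (C.s + 1 + β) : ℕ) : ZMod C.q) := by
    refine Finset.sum_congr rfl fun β hβ => ?_
    have hβ := Finset.mem_Ico.mp hβ
    rw [bbit, bbit, if_neg (by omega), if_neg (by omega)]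
  simp only [sub_mul, Finset.sum_sub_distrib, hrow, hset]
  rw [gExp, gExp, hshift, ← half]
  ring

/-- Rows cancel for a pair of positions differing at one of the row variables. -/
lemma sum_rows_eq_zero (t1 t2 t2' : ℕ) {x y β : ℕ} (hβ : β < C.k + 1)
    (hne : x.testBit (C.rowVertex β) ≠ y.testBit (C.rowVertex β)) :
    ∑ ν ∈ Finset.range (2 ^ (C.k + 1)),
      (ZMod.stdAddChar (C.gExp t1 t2 ν x - C.gExp t1 t2' ν y) : ℂ) = 0 := by
  refine Finset.sum_eq_zero_of_sign_reversing _ _ (· ^^^ 2 ^ β) ?_ ?_ ?_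
  · intro ν hν
    exact Finset.mem_range.mpr (Nat.xor_two_pow_lt (Finset.mem_range.mp hν) hβ)
  · intro ν _
    exact Nat.xor_xor_cancel_right ..
  · intro ν _
    rw [← stdAddChar_add_half, gExp_sub, gExp_sub]
    have := C.half_mul_sum_bitc_xor (idx := id) (Set.injOn_id _)
      (fun β => bitc C.q x (C.rowVertex β) - bitc C.q y (C.rowVertex β)) ν hβ
    simp only [id, C.half_mul_bitc_sub hne] at this
    rw [this]
    congr 1
    ring

/-- Positions cancel in the in-phase correlation of two sets with different `t_2`. -/
lemma sum_in_phase_eq_zero (t1 ν : ℕ) {t2 t2' β : ℕ} (hβ : β < C.k + 1)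
    (hne : t2.testBit β ≠ t2'.testBit β) :
    ∑ x ∈ Finset.range (2 ^ C.m),
      (ZMod.stdAddChar (C.gExp t1 t2 ν x - C.gExp t1 t2' ν x) : ℂ) = 0 := by
  refine Finset.sum_eq_zero_of_sign_reversing _ _ (· ^^^ 2 ^ C.setVertex β) ?_ ?_ ?_
  · intro x hx
    exact Finset.mem_range.mpr (Nat.xor_two_pow_lt (Finset.mem_range.mp hx) C.setVertex_lt)
  · intro x _
    exact Nat.xor_xor_cancel_right ..
  · intro x _
    rw [← stdAddChar_add_half, gExp_sub, gExp_sub,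
      C.half_mul_sum_bitc_xor C.setVertex_injOn _ x hβ,
      C.half_mul_sum_bitc_xor C.setVertex_injOn _ x hβ]
    have := C.half_mul_bitc_sub hne
    congr 1
    simp only [sub_self, zero_mul, Finset.sum_const_zero]
    linear_combination this

/-- `x` and `y` have the same bits at all the row variables `j_0, …, j_{k-1}, γ_1`. -/
def RowAgree (x y : ℕ) : Prop :=
  ∀ β < C.k + 1, x.testBit (C.rowVertex β) = y.testBit (C.rowVertex β)

variable {C}

lemma RowAgree.testBit_jfull {x y β : ℕ} (h : C.RowAgree x y) (hβ : β < C.k) :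
    x.testBit (C.jfull β) = y.testBit (C.jfull β) := by
  have := h β (by omega)
  rwa [rowVertex, if_pos hβ] at this

lemma RowAgree.testBit_pathVertex_zero {x y : ℕ} (h : C.RowAgree x y) :
    x.testBit (C.pathVertex 0) = y.testBit (C.pathVertex 0) := by
  have := h C.k (by omega)
  rwa [rowVertex, if_neg (lt_irrefl _)] at this

lemma RowAgree.xor {x y : ℕ} (h : C.RowAgree x y) (z : ℕ) : C.RowAgree (x ^^^ z) (y ^^^ z) := by
  intro β hβ
  rw [Nat.testBit_xor, Nat.testBit_xor, h β hβ]

variable (C)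

/-- The position on the path of the first set bit of `D`. -/
noncomputable def firstOnPath (D : ℕ) : ℕ := sInf {r | D.testBit (C.pathVertex r)}

variable {C}

lemma RowAgree.firstOnPath_spec {x y : ℕ} (h : C.RowAgree x y) (hx : x < 2 ^ C.m)
    (hy : y < 2 ^ C.m) (hne : x ≠ y) :
    ∃ p, C.firstOnPath (x ^^^ y) = p + 1 ∧ p + 1 < C.m - C.k ∧
      x.testBit (C.pathVertex (p + 1)) ≠ y.testBit (C.pathVertex (p + 1)) ∧
      ∀ r ≤ p, x.testBit (C.pathVertex r) = y.testBit (C.pathVertex r) := by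
  have hiff : ∀ r, (x ^^^ y).testBit (C.pathVertex r) = true ↔
      x.testBit (C.pathVertex r) ≠ y.testBit (C.pathVertex r) := by
    intro r
    rw [Nat.testBit_xor, bne_iff_ne]
  obtain ⟨i, hi⟩ := Nat.exists_testBit_ne_of_ne hne
  have him : i < C.m := by
    by_contra hge
    have hpow : 2 ^ C.m ≤ 2 ^ i := Nat.pow_le_pow_right two_pos (not_lt.mp hge)
    rw [Nat.testBit_lt_two_pow (hx.trans_le hpow), Nat.testBit_lt_two_pow (hy.trans_le hpow)] at hi
    exact hi rfl
  obtain ⟨β, hβ, rfl⟩ | ⟨r, hr, rfl⟩ := C.exists_jfull_or_pathVertex him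
  · exact absurd (h.testBit_jfull hβ) hi
  · have hmem : r ∈ {r | (x ^^^ y).testBit (C.pathVertex r)} := (hiff r).mpr hi
    have hfirst : C.firstOnPath (x ^^^ y) ∈ {r | (x ^^^ y).testBit (C.pathVertex r)} :=
      Nat.sInf_mem ⟨r, hmem⟩
    have hle : C.firstOnPath (x ^^^ y) ≤ r := Nat.sInf_le hmem
    have hdiff := (hiff _).mp hfirst
    obtain hzero | ⟨p, hp⟩ := Nat.eq_zero_or_eq_succ_pred (C.firstOnPath (x ^^^ y)) |>.imp_right
      fun hs => (⟨_, hs⟩ : ∃ p, C.firstOnPath (x ^^^ y) = p + 1)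
    · rw [hzero] at hdiff
      exact absurd h.testBit_pathVertex_zero hdiff
    · refine ⟨p, hp, by omega, hp ▸ hdiff, fun r' hr' => ?_⟩
      by_contra hne'
      have : C.firstOnPath (x ^^^ y) ≤ r' := Nat.sInf_le ((hiff r').mpr hne')
      omega

/-- Flipping a common bit just before the first disagreement on the path changes the difference
of the values of `f` by `q/2`. -/
lemma RowAgree.f_sub_f_flip {x y p : ℕ} (h : C.RowAgree x y) (hx : x < 2 ^ C.m)
    (hy : y < 2 ^ C.m) (hp : p + 1 < C.m - C.k)
    (hne : x.testBit (C.pathVertex (p + 1)) ≠ y.testBit (C.pathVertex (p + 1)))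
    (heq : ∀ r ≤ p, x.testBit (C.pathVertex r) = y.testBit (C.pathVertex r)) :
    C.f (x ^^^ 2 ^ C.pathVertex p) - C.f (y ^^^ 2 ^ C.pathVertex p) =
      C.f x - C.f y + C.half := by
  have hsk := C.hsk
  set c := C.pathVertex p with hc
  have hcm : c < C.m := by
    have := C.pathVertex_lt (r := p) (by omega)
    omega
  have hjv : ∀ β < C.k - C.s, C.jv β = C.jfull β := fun β hβ => (if_pos hβ).symm
  have hjc : ∀ β < C.k - C.s, C.jv β ≠ c := fun β hβ => by
    rw [hjv β hβ]
    exact C.jfull_ne_pathVertex (by omega)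
  have hflip : ∀ z r, r ≠ c → (z ^^^ 2 ^ c).testBit r = z.testBit r := fun z r hr => by
    rw [Nat.testBit_xor_two_pow, if_neg hr]
  have hyx : ∀ β < C.k - C.s, y.testBit (C.jv β) = x.testBit (C.jv β) := fun β hβ => by
    rw [hjv β hβ]
    exact (h.testBit_jfull (by omega)).symm
  obtain ⟨w, v', v, hf⟩ := C.hf fun β => x.testBit (C.jv β)
  rw [hf _ (Nat.xor_two_pow_lt hx hcm) fun β hβ => hflip x _ (hjc β hβ),
    hf _ (Nat.xor_two_pow_lt hy hcm) fun β hβ => (hflip y _ (hjc β hβ)).trans (hyx β hβ),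
    hf x hx fun _ _ => rfl, hf y hy hyx]
  have hcommon : bitc C.q x c = bitc C.q y c := bitc_congr _ (heq p le_rfl)
  have hlin : ∀ r, bitc C.q (x ^^^ 2 ^ c) r - bitc C.q (y ^^^ 2 ^ c) r =
      bitc C.q x r - bitc C.q y r := by
    intro r
    rw [bitc_xor_two_pow, bitc_xor_two_pow]
    split_ifs with hr
    · rw [hr, hcommon]
      ring
    · rfl
  have hsum : ∀ (n : ℕ) (a : ℕ → ZMod C.q) (idx : ℕ → ℕ),
      ∑ β ∈ Finset.range n, a β * bitc C.q (x ^^^ 2 ^ c) (idx β)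
        - ∑ β ∈ Finset.range n, a β * bitc C.q (y ^^^ 2 ^ c) (idx β) =
      ∑ β ∈ Finset.range n, a β * bitc C.q x (idx β)
        - ∑ β ∈ Finset.range n, a β * bitc C.q y (idx β) := by
    intro n a idx
    simp only [← Finset.sum_sub_distrib, ← mul_sub, hlin]
  have hquad : C.half * (∑ β ∈ Finset.range (C.m - C.k - 1),
          bitc C.q (x ^^^ 2 ^ c) (C.pathVertex β) * bitc C.q (x ^^^ 2 ^ c) (C.pathVertex (β + 1)))
        - C.half * (∑ β ∈ Finset.range (C.m - C.k - 1),
          bitc C.q (y ^^^ 2 ^ c) (C.pathVertex β) * bitc C.q (y ^^^ 2 ^ c) (C.pathVertex (β + 1))) =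
      C.half * (∑ β ∈ Finset.range (C.m - C.k - 1),
          bitc C.q x (C.pathVertex β) * bitc C.q x (C.pathVertex (β + 1)))
        - C.half * (∑ β ∈ Finset.range (C.m - C.k - 1),
          bitc C.q y (C.pathVertex β) * bitc C.q y (C.pathVertex (β + 1))) + C.half := by
    have hind : C.half = ∑ β ∈ Finset.range (C.m - C.k - 1), if β = p then C.half else 0 := by
      rw [Finset.sum_ite_eq', if_pos (Finset.mem_range.mpr (by omega))]
    nth_rewrite 5 [hind]
    simp only [Finset.mul_sum, ← Finset.sum_sub_distrib, ← Finset.sum_add_distrib]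
    refine Finset.sum_congr rfl fun β hβ => ?_
    have hβ := Finset.mem_range.mp hβ
    have hinj : ∀ r < C.m - C.k, C.pathVertex r = c → r = p := fun r hr h' =>
      C.pathVertex_injOn hr (show p < C.m - C.k by omega) h'
    rcases lt_trichotomy β p with hlt | rfl | hgt
    · have hxy : ∀ r ≤ p, bitc C.q x (C.pathVertex r) = bitc C.q y (C.pathVertex r) :=
        fun r hr => bitc_congr _ (heq r hr)
      simp only [bitc_xor_two_pow, hxy β (by omega), hxy (β + 1) (by omega), if_neg hlt.ne]
      ring
    · have hnext : C.pathVertex (β + 1) ≠ c := fun h' => by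
        have := hinj _ (by omega) h'
        omega
      have hodd := C.half_mul_bitc_sub hne
      simp only [bitc_xor_two_pow, if_neg hnext, ← hc, if_true, hcommon]
      linear_combination (1 - 2 * bitc C.q y c) * hodd - bitc C.q y c * C.half_add_half
    · have hcur : C.pathVertex β ≠ c := fun h' => by
        have := hinj _ (by omega) h'
        omega
      have hnext : C.pathVertex (β + 1) ≠ c := fun h' => by
        have := hinj _ (by omega) h'
        omega
      simp only [bitc_xor_two_pow, if_neg hcur, if_neg hnext, if_neg hgt.ne', add_zero]
  simp only [pathVertex, half] at hquad ⊢
  linear_combination hquad + hsum (C.m - C.k) w C.iv + hsum C.s v' (C.m - C.s + ·)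

lemma RowAgree.stdAddChar_flip {x y p : ℕ} (h : C.RowAgree x y) (hx : x < 2 ^ C.m)
    (hy : y < 2 ^ C.m) (hp : p + 1 < C.m - C.k)
    (hne : x.testBit (C.pathVertex (p + 1)) ≠ y.testBit (C.pathVertex (p + 1)))
    (heq : ∀ r ≤ p, x.testBit (C.pathVertex r) = y.testBit (C.pathVertex r))
    (t1 t2 t2' ν : ℕ) :
    (ZMod.stdAddChar (C.gExp t1 t2 ν (x ^^^ 2 ^ C.pathVertex p)
      - C.gExp t1 t2' ν (y ^^^ 2 ^ C.pathVertex p)) : ℂ) =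
      -ZMod.stdAddChar (C.gExp t1 t2 ν x - C.gExp t1 t2' ν y) := by
  have hrow : ∀ {x y : ℕ}, C.RowAgree x y → ∑ β ∈ Finset.range (C.k + 1),
      (bitc C.q x (C.rowVertex β) - bitc C.q y (C.rowVertex β)) * bitc C.q ν β = 0 := by
    intro x y h
    refine Finset.sum_eq_zero fun β hβ => ?_
    rw [bitc_congr _ (h β (Finset.mem_range.mp hβ)), sub_self, zero_mul]
  rw [← stdAddChar_add_half, gExp_sub, gExp_sub, hrow h, hrow (h.xor _),
    h.f_sub_f_flip hx hy hp hne heq]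
  simp only [bitc_xor_two_pow, if_neg (C.setVertex_ne_pathVertex hp)]
  congr 1
  ring

variable (C)

/-- Out-of-phase correlations vanish. -/
lemma sum_out_of_phase_eq_zero (t1 t2 t2' : ℕ) {u : ℤ} (hu : u ≠ 0) :
    ∑ p ∈ (Finset.range (2 ^ C.m) ×ˢ Finset.range (2 ^ C.m)).filter
        (fun p : ℕ × ℕ => (p.2 : ℤ) = p.1 + u),
      ∑ ν ∈ Finset.range (2 ^ (C.k + 1)),
        (ZMod.stdAddChar (C.gExp t1 t2 ν p.1 - C.gExp t1 t2' ν p.2) : ℂ) = 0 := by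
  classical
  rw [← Finset.sum_filter_of_ne (p := fun p : ℕ × ℕ => C.RowAgree p.1 p.2)]
  swap
  · intro p _ hp β hβ
    by_contra hne
    exact hp (C.sum_rows_eq_zero t1 t2 t2' hβ hne)
  let c : ℕ × ℕ → ℕ := fun p => C.pathVertex (C.firstOnPath (p.1 ^^^ p.2) - 1)
  have hc : ∀ x y z : ℕ, c (x ^^^ z, y ^^^ z) = c (x, y) := by
    intro x y z
    have : (x ^^^ z) ^^^ (y ^^^ z) = x ^^^ y := by
      rw [Nat.xor_comm y z, ← Nat.xor_assoc, Nat.xor_xor_cancel_right]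
    simp only [c, this]
  refine Finset.sum_eq_zero_of_sign_reversing _ _
    (fun p => (p.1 ^^^ 2 ^ c p, p.2 ^^^ 2 ^ c p)) ?_ ?_ ?_
  all_goals
    rintro ⟨x, y⟩ hmem
    simp only [Finset.mem_filter, Finset.mem_product, Finset.mem_range] at hmem ⊢
    obtain ⟨⟨⟨hx, hy⟩, hxy⟩, hagree⟩ := hmem
    obtain ⟨p, hfirst, hp, hne, heq⟩ := hagree.firstOnPath_spec hx hy (by omega)
    have hcp : c (x, y) = C.pathVertex p := by simp only [c, hfirst, Nat.add_sub_cancel]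
  · have hlt : c (x, y) < C.m := by
      have := C.pathVertex_lt (r := p) (by omega)
      omega
    refine ⟨⟨⟨Nat.xor_two_pow_lt hx hlt, Nat.xor_two_pow_lt hy hlt⟩, ?_⟩, hagree.xor _⟩
    exact Nat.cast_xor_two_pow_eq_add hxy (by rw [hcp]; exact heq p le_rfl)
  · rw [hc, Nat.xor_xor_cancel_right, Nat.xor_xor_cancel_right]
  · rw [hcp, ← Finset.sum_neg_distrib]
    exact Finset.sum_congr rfl fun ν _ => hagree.stdAddChar_flip hx hy hp hne heq t1 t2 t2' ν

end ZCZSetup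

/-- **Lemma 2, first part.** For each fixed `0 ≤ t_1 ≤ 2^s − 1`, the family
`S^{t_1} = {S^{(t_1,t_2)} : 0 ≤ t_2 ≤ 2^{k+1} − 1}` is a `(2^{k+1}, 2^{k+1}, 2^m)`-CCC:
the row-wise ACCF sum equals `2^{m+k+1}` when `t_2 = t_2'` and `u = 0`, and `0` for all
other shifts `|u| < 2^m` (same or different `t_2`). -/
theorem lemma2_first_part (C : ZCZSetup) (t1 : ℕ) (ht1 : t1 < 2 ^ C.s)
    (t2 t2' : ℕ) (ht2 : t2 < 2 ^ (C.k + 1)) (ht2' : t2' < 2 ^ (C.k + 1))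
    (u : ℤ) (hu : u.natAbs < 2 ^ C.m) :
    (∑ ν ∈ Finset.range (2 ^ (C.k + 1)),
        accf (2 ^ C.m) (C.Sseq t1 t2 ν) (C.Sseq t1 t2' ν) u) =
      if t2 = t2' ∧ u = 0 then ((2 : ℂ) ^ (C.m + C.k + 1)) else 0 := by
  simp only [accf_eq_sum_pairs, ZCZSetup.Sseq_mul_conj]
  by_cases hu0 : u = 0
  · subst hu0
    have hdiag : (Finset.range (2 ^ C.m) ×ˢ Finset.range (2 ^ C.m)).filter
        (fun p : ℕ × ℕ => (p.2 : ℤ) = p.1 + 0) = (Finset.range (2 ^ C.m)).diag := by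
      ext ⟨x, y⟩
      simp only [Finset.mem_filter, Finset.mem_product, Finset.mem_range, Finset.mem_diag]
      omega
    simp only [hdiag, Finset.sum_diag, and_true]
    split_ifs with ht
    · subst ht
      simp only [sub_self, AddChar.map_zero_eq_one, Finset.sum_const, Finset.card_range,
        nsmul_eq_mul, mul_one]
      push_cast
      ring
    · obtain ⟨β, hne⟩ := Nat.exists_testBit_ne_of_ne ht
      have hβ : β < C.k + 1 := by
        by_contra hge
        have hpow : 2 ^ (C.k + 1) ≤ 2 ^ β := Nat.pow_le_pow_right two_pos (not_lt.mp hge)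
        rw [Nat.testBit_lt_two_pow (ht2.trans_le hpow),
          Nat.testBit_lt_two_pow (ht2'.trans_le hpow)] at hne
        exact hne rfl
      exact Finset.sum_eq_zero fun ν _ => C.sum_in_phase_eq_zero t1 ν hβ hne
  · rw [if_neg fun h => hu0 h.2, Finset.sum_comm]
    exact C.sum_out_of_phase_eq_zero t1 t2 t2' hu0
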